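/- Fix n, d ∈ ℕ, 1 < p < ∞, T > 0, x ∈ ℝ^n, and smooth vector fields X_0, X_1, …, X_d : ℝ^n → ℝ^n that are bounded and have bounded first and second derivatives. Let F : L^p([0,T], ℝ^d) → ℝ^n be the endpoint map F(u) = γ_u(T), where γ_u is the trajectory of u starting at x; F is Fréchet differentiable at every point. If a sequence u_n converges weakly to u in L^p([0,T], ℝ^d), then for every v ∈ L^p([0,T], ℝ^d) the differentials satisfy d_{u_n}F(v) → d_uF(v) in ℝ^n. -/

import Mathlib

open MeasureTheory Set Filter Topology

noncomputable section

/-- Trajectory on `[0,T]` of a control `u` starting at `x` for the affine control system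
determined by `X₀, X₁, …, X_d`. -/
def IsTrajectory {n d : ℕ}
    (X0 : EuclideanSpace ℝ (Fin n) → EuclideanSpace ℝ (Fin n))
    (X : Fin d → EuclideanSpace ℝ (Fin n) → EuclideanSpace ℝ (Fin n))
    (x : EuclideanSpace ℝ (Fin n)) (T : ℝ)
    (u : ℝ → EuclideanSpace ℝ (Fin d))
    (γ : ℝ → EuclideanSpace ℝ (Fin n)) : Prop :=
  ContinuousOn γ (Set.Icc 0 T) ∧
    ∀ t ∈ Set.Icc (0:ℝ) T,
      γ t = x + ∫ s in (0:ℝ)..t, (X0 (γ s) + ∑ i, u s i • X i (γ s))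

lemma gron {T B : ℝ} (hT : 0 ≤ T) (hB : 0 ≤ B) {φ a : ℝ → ℝ} (hφ : ContinuousOn φ (Icc 0 T))
    (hφ0 : ∀ t, 0 ≤ φ t)
    (ha0 : ∀ s, 0 ≤ a s) (ha : IntervalIntegrable a volume 0 T)
    (h : ∀ t ∈ Icc (0:ℝ) T, φ t ≤ B + ∫ s in (0:ℝ)..t, a s * φ s) :
    ∀ t ∈ Icc (0:ℝ) T, φ t ≤ B * Real.exp (2 * ∫ s in (0:ℝ)..T, a s) := by
  have haφ : IntervalIntegrable (fun s => a s * φ s) volume 0 T :=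
    ha.mul_continuousOn (by rwa [uIcc_of_le hT])
  have sub : ∀ {f : ℝ → ℝ}, IntervalIntegrable f volume 0 T → ∀ s ∈ Icc (0:ℝ) T, ∀ t ∈ Icc (0:ℝ) T,
      IntervalIntegrable f volume s t := by
    intro f hf s hs t ht
    exact hf.mono_set (by rw [uIcc_of_le hT]; exact (convex_Icc (0:ℝ) T).ordConnected.uIcc_subset hs ht)
  have h00 : (0:ℝ) ∈ Icc (0:ℝ) T := ⟨le_rfl, hT⟩
  set A : ℝ → ℝ := fun t => ∫ s in (0:ℝ)..t, a s with hA
  set H : ℝ → ℝ := fun t => B + ∫ s in (0:ℝ)..t, a s * φ s with hH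
  have Acont : ContinuousOn A (Icc 0 T) := by
    have := intervalIntegral.continuousOn_primitive_interval' ha (a := 0) (by rw [uIcc_of_le hT]; exact h00)
    rwa [uIcc_of_le hT] at this
  have Hcont : ContinuousOn H (Icc 0 T) := by
    have := intervalIntegral.continuousOn_primitive_interval' haφ (a := 0) (by rw [uIcc_of_le hT]; exact h00)
    rw [uIcc_of_le hT] at this
    exact continuousOn_const.add this
  have Asub : ∀ s ∈ Icc (0:ℝ) T, ∀ t ∈ Icc (0:ℝ) T, A t - A s = ∫ x in s..t, a x := by
    intro s hs t ht
    exact intervalIntegral.integral_interval_sub_left (sub ha 0 h00 t ht) (sub ha 0 h00 s hs)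
  have Hsub : ∀ s ∈ Icc (0:ℝ) T, ∀ t ∈ Icc (0:ℝ) T, H t - H s = ∫ x in s..t, a x * φ x := by
    intro s hs t ht
    simp only [hH, add_sub_add_left_eq_sub]
    exact intervalIntegral.integral_interval_sub_left (sub haφ 0 h00 t ht) (sub haφ 0 h00 s hs)
  have Hmono : ∀ s ∈ Icc (0:ℝ) T, ∀ t ∈ Icc (0:ℝ) T, s ≤ t → H s ≤ H t := by
    intro s hs t ht hst
    have := Hsub s hs t ht
    have h2 : 0 ≤ ∫ x in s..t, a x * φ x :=
      intervalIntegral.integral_nonneg hst (fun x _ => mul_nonneg (ha0 x) (hφ0 x))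
    linarith
  have Amono : ∀ s ∈ Icc (0:ℝ) T, ∀ t ∈ Icc (0:ℝ) T, s ≤ t → A s ≤ A t := by
    intro s hs t ht hst
    have := Asub s hs t ht
    have h2 : 0 ≤ ∫ x in s..t, a x :=
      intervalIntegral.integral_nonneg hst (fun x _ => ha0 x)
    linarith
  have key : Icc (0:ℝ) T ⊆ {t | H t ≤ B * Real.exp (2 * A t)} := by
    apply IsClosed.Icc_subset_of_forall_exists_gt
    · have := (isClosed_Icc (a := (0:ℝ)) (b := T)).isClosed_le Hcont
        (continuousOn_const.mul (Real.continuous_exp.comp_continuousOn (continuousOn_const.mul Acont)) :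
          ContinuousOn (fun t => B * Real.exp (2 * A t)) (Icc 0 T))
      convert this using 1
      ext t; simp only [mem_inter_iff, mem_ofPred_eq]; tauto
    · simp [hH, hA]
    · rintro s ⟨hs, hs0, hsT⟩ y hy
      have hsI : s ∈ Icc (0:ℝ) T := ⟨hs0, hsT.le⟩
      have c1 : Tendsto A (𝓝[>] s) (𝓝 (A s)) := by
        have := (Acont s hsI).mono_left (nhdsWithin_mono s (t := Icc 0 T) (s := Ioc s T)
          (fun z hz => ⟨hs0.trans hz.1.le, hz.2⟩))
        rwa [nhdsWithin_Ioc_eq_nhdsGT hsT] at this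
      have c2 : ∀ᶠ t in 𝓝[>] s, A t < A s + 1/2 := c1.eventually_lt_const (by linarith)
      have c3 : ∀ᶠ t in 𝓝[>] s, t ∈ Ioc s (min y T) := Ioc_mem_nhdsGT (lt_min hy hsT)
      obtain ⟨t, ht2, hts, hty⟩ := (c2.and c3).exists
      have htI : t ∈ Icc (0:ℝ) T := ⟨hs0.trans hts.le, hty.trans (min_le_right _ _)⟩
      refine ⟨t, ?_, hts, hty.trans (min_le_left _ _)⟩
      simp only [mem_ofPred_eq] at hs ⊢
      have e1 : H t - H s ≤ (A t - A s) * H t := by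
        rw [Hsub s hsI t htI, Asub s hsI t htI, ← intervalIntegral.integral_mul_const]
        apply intervalIntegral.integral_mono_on hts.le (sub haφ s hsI t htI)
          ((sub ha s hsI t htI).mul_const _)
        intro x hx
        have hxI : x ∈ Icc (0:ℝ) T := ⟨hs0.trans hx.1, hx.2.trans htI.2⟩
        exact mul_le_mul_of_nonneg_left ((h x hxI).trans (Hmono x hxI t htI hx.2)) (ha0 x)
      have e2 := Amono s hsI t htI hts.le
      set z := A t - A s with hz
      have hz0 : 0 ≤ z := by linarith
      have hz1 : z ≤ 1/2 := by linarith
      have e3 : (1:ℝ) ≤ (1 - z) * Real.exp (2*z) := by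
        have := Real.add_one_le_exp (2*z)
        nlinarith
      have e4 : (1 - z) * H t ≤ H s := by linarith
      have e5 : 0 ≤ H t := (hφ0 t).trans (h t htI)
      have e6 : H t ≤ H s * Real.exp (2*z) := by
        calc H t = 1 * H t := (one_mul _).symm
          _ ≤ ((1 - z) * Real.exp (2*z)) * H t := mul_le_mul_of_nonneg_right e3 e5
          _ = ((1 - z) * H t) * Real.exp (2*z) := by ring
          _ ≤ _ := mul_le_mul_of_nonneg_right e4 (Real.exp_pos _).le
      calc H t ≤ H s * Real.exp (2*z) := e6
        _ ≤ (B * Real.exp (2 * A s)) * Real.exp (2*z) := mul_le_mul_of_nonneg_right hs (Real.exp_pos _).le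
        _ = B * Real.exp (2 * A t) := by rw [mul_assoc, ← Real.exp_add]; congr 2; rw [hz]; ring
  intro t ht
  refine (h t ht).trans ((key ht).trans ?_)
  have := Amono t ht T ⟨hT, le_rfl⟩ ht.2
  gcongr
  
lemma gron_vec {E : Type*} [NormedAddCommGroup E] [NormedSpace ℝ E] {T ρ : ℝ} (hT : 0 ≤ T)
    (hρ : 0 ≤ ρ) {δ k r : ℝ → E} {a b : ℝ → ℝ} (hδ : ContinuousOn δ (Icc 0 T))
    (ha0 : ∀ s, 0 ≤ a s) (ha : IntervalIntegrable a volume 0 T)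
    (hb0 : ∀ s, 0 ≤ b s) (hb : IntervalIntegrable b volume 0 T)
    (hk : ∀ s ∈ Icc (0:ℝ) T, ‖k s‖ ≤ a s * ‖δ s‖ + b s)
    (hr : ∀ t ∈ Icc (0:ℝ) T, ‖r t‖ ≤ ρ)
    (h : ∀ t ∈ Icc (0:ℝ) T, δ t = r t + ∫ s in (0:ℝ)..t, k s) :
    ∀ t ∈ Icc (0:ℝ) T, ‖δ t‖ ≤ (ρ + ∫ s in (0:ℝ)..T, b s) * Real.exp (2 * ∫ s in (0:ℝ)..T, a s) := by
  have hI : 0 ≤ ∫ s in (0:ℝ)..T, b s := intervalIntegral.integral_nonneg hT (fun x _ => hb0 x)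
  apply gron hT (by positivity) hδ.norm (fun t => norm_nonneg _) ha0 ha
  intro t ht
  have haφ : IntervalIntegrable (fun s => a s * ‖δ s‖) volume 0 T :=
    ha.mul_continuousOn (by rw [uIcc_of_le hT]; exact hδ.norm)
  have sub : ∀ {f : ℝ → ℝ}, IntervalIntegrable f volume 0 T → IntervalIntegrable f volume 0 t := by
    intro f hf
    exact hf.mono_set (by rw [uIcc_of_le hT, uIcc_of_le ht.1]; exact Icc_subset_Icc_right ht.2)
  have e1 : ‖∫ s in (0:ℝ)..t, k s‖ ≤ ∫ s in (0:ℝ)..t, (a s * ‖δ s‖ + b s) :=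
    intervalIntegral.norm_integral_le_of_norm_le ht.1 (Eventually.of_forall fun s hs => hk s ⟨hs.1.le, hs.2.trans ht.2⟩)
      ((sub haφ).add (sub hb))
  rw [intervalIntegral.integral_add (sub haφ) (sub hb)] at e1
  have e2 : ∫ s in (0:ℝ)..t, b s ≤ ∫ s in (0:ℝ)..T, b s :=
    intervalIntegral.integral_mono_interval le_rfl ht.1 ht.2 (Eventually.of_forall hb0) hb
  calc ‖δ t‖ ≤ ‖r t‖ + ‖∫ s in (0:ℝ)..t, k s‖ := by rw [h t ht]; exact norm_add_le _ _
    _ ≤ _ := by have := hr t ht; linarith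

lemma second_diff {E : Type*} [NormedAddCommGroup E] [NormedSpace ℝ E] {f : E → E}
    (hf : ContDiff ℝ (⊤ : ℕ∞) f) {C1 C2 : ℝ} (h1 : ∀ y, ‖fderiv ℝ f y‖ ≤ C1)
    (h2 : ∀ y, ‖fderiv ℝ (fderiv ℝ f) y‖ ≤ C2) (y0 y1 y2 : E) :
    ‖f y2 - (2:ℝ) • f y1 + f y0‖ ≤ C1 * ‖y2 - (2:ℝ) • y1 + y0‖ + C2 * ‖y1 - y0‖ ^ 2 := by
  have hd : Differentiable ℝ f := hf.differentiable (by simp)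
  have hd2 : Differentiable ℝ (fderiv ℝ f) := 
    (hf.fderiv_right (m := 1) (by norm_cast)).differentiable (by simp)
  have lip : ∀ x y, ‖f y - f x‖ ≤ C1 * ‖y - x‖ := fun x y =>
    convex_univ.norm_image_sub_le_of_norm_fderiv_le (fun z _ => hd z) (fun z _ => h1 z) (mem_univ x) (mem_univ y)
  have lip2 : ∀ x y, ‖fderiv ℝ f y - fderiv ℝ f x‖ ≤ C2 * ‖y - x‖ := fun x y =>
    convex_univ.norm_image_sub_le_of_norm_fderiv_le (fun z _ => hd2 z) (fun z _ => h2 z) (mem_univ x) (mem_univ y)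
  set e := y1 - y0 with he
  -- g z = f (z + e) - f z
  have gd : ∀ z, HasFDerivAt (fun z => f (z + e) - f z) (fderiv ℝ f (z + e) - fderiv ℝ f z) z := by
    intro z
    exact ((hasFDerivAt_comp_add_right e).2 (hd (z+e)).hasFDerivAt).sub (hd z).hasFDerivAt
  have gl := convex_univ.norm_image_sub_le_of_norm_hasFDerivWithin_le (C := C2 * ‖e‖)
    (fun z _ => (gd z).hasFDerivWithinAt) (fun z _ => by simpa using lip2 z (z+e)) (mem_univ y0) (mem_univ (y0+e))
  have : f y2 - (2:ℝ) • f y1 + f y0 = (f y2 - f (y0 + e + e)) + 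
     ((f (y0 + e + e) - f (y0 + e)) - (f (y0 + e) - f y0)) := by
    have : y0 + e = y1 := by simp [he]
    rw [this]; module
  rw [this]
  have l1 := lip (y0 + e + e) y2
  have : y2 - (y0 + e + e) = y2 - (2:ℝ) • y1 + y0 := by rw [he]; module
  rw [this] at l1
  refine (norm_add_le _ _).trans (add_le_add l1 (gl.trans (le_of_eq ?_)))
  simp; ring

def ctlG {n d : ℕ} (X : Fin d → EuclideanSpace ℝ (Fin n) → EuclideanSpace ℝ (Fin n))
    (w : EuclideanSpace ℝ (Fin d)) (y : EuclideanSpace ℝ (Fin n)) : EuclideanSpace ℝ (Fin n) :=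
  ∑ i, w i • X i y

def ctlF {n d : ℕ} (X0 : EuclideanSpace ℝ (Fin n) → EuclideanSpace ℝ (Fin n))
    (X : Fin d → EuclideanSpace ℝ (Fin n) → EuclideanSpace ℝ (Fin n))
    (w : EuclideanSpace ℝ (Fin d)) (y : EuclideanSpace ℝ (Fin n)) : EuclideanSpace ℝ (Fin n) :=
  X0 y + ∑ i, w i • X i y

structure CtlGood {n d : ℕ} (X0 : EuclideanSpace ℝ (Fin n) → EuclideanSpace ℝ (Fin n))
    (X : Fin d → EuclideanSpace ℝ (Fin n) → EuclideanSpace ℝ (Fin n)) (L : ℝ) : Prop where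
  nn : 0 ≤ L
  c0 : Continuous X0
  c1 : ∀ i, Continuous (X i)
  gb : ∀ w y, ‖ctlG X w y‖ ≤ L * ‖w‖
  gl : ∀ w y z, ‖ctlG X w y - ctlG X w z‖ ≤ L * ‖w‖ * ‖y - z‖
  fl : ∀ w y z, ‖ctlF X0 X w y - ctlF X0 X w z‖ ≤ L * (1 + ‖w‖) * ‖y - z‖
  fs : ∀ w y0 y1 y2, ‖ctlF X0 X w y2 - (2:ℝ) • ctlF X0 X w y1 + ctlF X0 X w y0‖ ≤
    L * (1 + ‖w‖) * (‖y2 - (2:ℝ) • y1 + y0‖ + ‖y1 - y0‖ ^ 2)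

lemma sum_bound {n d : ℕ} (w : EuclideanSpace ℝ (Fin d)) (Z : Fin d → EuclideanSpace ℝ (Fin n))
    {C : ℝ} (hC : ∀ i, ‖Z i‖ ≤ C) : ‖∑ i, w i • Z i‖ ≤ d * ‖w‖ * C := by
  calc ‖∑ i, w i • Z i‖ ≤ ∑ i, ‖w i • Z i‖ := norm_sum_le _ _
    _ ≤ ∑ i : Fin d, ‖w‖ * C := by
      apply Finset.sum_le_sum
      intro i _
      rw [norm_smul]
      exact mul_le_mul (PiLp.norm_apply_le w i) (hC i) (norm_nonneg _) (norm_nonneg _)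
    _ = _ := by simp; ring

lemma exists_good {n d : ℕ} 
    (X0 : EuclideanSpace ℝ (Fin n) → EuclideanSpace ℝ (Fin n))
    (X : Fin d → EuclideanSpace ℝ (Fin n) → EuclideanSpace ℝ (Fin n))
    (hX0smooth : ContDiff ℝ (⊤ : ℕ∞) X0) (hXsmooth : ∀ i, ContDiff ℝ (⊤ : ℕ∞) (X i))
    (hXbdd : ∃ C, ∀ i y, ‖X i y‖ ≤ C)
    (hX0der : ∃ C, ∀ y, ‖fderiv ℝ X0 y‖ ≤ C)
    (hXder : ∃ C, ∀ i y, ‖fderiv ℝ (X i) y‖ ≤ C)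
    (hX0der2 : ∃ C, ∀ y, ‖fderiv ℝ (fderiv ℝ X0) y‖ ≤ C)
    (hXder2 : ∃ C, ∀ i y, ‖fderiv ℝ (fderiv ℝ (X i)) y‖ ≤ C) :
    ∃ L, CtlGood X0 X L := by
  obtain ⟨C1, h1⟩ := hXbdd
  obtain ⟨C2, h2⟩ := hX0der
  obtain ⟨C3, h3⟩ := hXder
  obtain ⟨C4, h4⟩ := hX0der2
  obtain ⟨C5, h5⟩ := hXder2
  obtain ⟨C, hC0, l1, l2, l3, l4, l5⟩ : ∃ C : ℝ, 0 ≤ C ∧ C1 ≤ C ∧ C2 ≤ C ∧ C3 ≤ C ∧ C4 ≤ C ∧ C5 ≤ C := by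
    refine ⟨|C1| + |C2| + |C3| + |C4| + |C5|, by positivity, ?_, ?_, ?_, ?_, ?_⟩ <;>
    linarith [le_abs_self C1, le_abs_self C2, le_abs_self C3, le_abs_self C4, le_abs_self C5,
      abs_nonneg C1, abs_nonneg C2, abs_nonneg C3, abs_nonneg C4, abs_nonneg C5]
  have lip : ∀ {f : EuclideanSpace ℝ (Fin n) → EuclideanSpace ℝ (Fin n)}, ContDiff ℝ (⊤ : ℕ∞) f →
      (∀ y, ‖fderiv ℝ f y‖ ≤ C) → ∀ y z, ‖f y - f z‖ ≤ C * ‖y - z‖ := fun hf h y z =>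
    convex_univ.norm_image_sub_le_of_norm_fderiv_le
      (fun z _ => (hf.differentiable (by simp)) z) (fun z _ => h z) (mem_univ z) (mem_univ y)
  have gl : ∀ w y z, ‖ctlG X w y - ctlG X w z‖ ≤ d * ‖w‖ * (C * ‖y - z‖) := by
    intro w y z
    have : ctlG X w y - ctlG X w z = ∑ i, w i • (X i y - X i z) := by
      simp [ctlG, smul_sub, Finset.sum_sub_distrib]
    rw [this]
    exact sum_bound _ _ (fun i => lip (hXsmooth i) (fun y => (h3 i y).trans l3) y z)
  have hd0 : (0:ℝ) ≤ d := Nat.cast_nonneg d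
  refine ⟨C * (1 + d), by positivity, hX0smooth.continuous, fun i => (hXsmooth i).continuous, ?_, ?_, ?_, ?_⟩
  · intro w y
    refine (sum_bound w _ (fun i => (h1 i y).trans l1)).trans ?_
    nlinarith [mul_nonneg hC0 (norm_nonneg w)]
  · intro w y z
    refine (gl w y z).trans ?_
    nlinarith [mul_nonneg (mul_nonneg hC0 (norm_nonneg w)) (norm_nonneg (y-z))]
  · intro w y z
    have : ctlF X0 X w y - ctlF X0 X w z = (X0 y - X0 z) + (ctlG X w y - ctlG X w z) := by
      simp only [ctlF, ctlG]; abel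
    rw [this]
    refine (norm_add_le _ _).trans ((add_le_add (lip hX0smooth (fun y => (h2 y).trans l2) y z) (gl w y z)).trans ?_)
    have e : 0 ≤ (C * ‖y - z‖) * (d + ‖w‖) := by positivity
    linarith
  · intro w y0 y1 y2
    set B := ‖y2 - (2:ℝ) • y1 + y0‖ + ‖y1 - y0‖ ^ 2 with hB
    have hB0 : 0 ≤ B := by positivity
    have : ctlF X0 X w y2 - (2:ℝ) • ctlF X0 X w y1 + ctlF X0 X w y0 =
      (X0 y2 - (2:ℝ) • X0 y1 + X0 y0) + ∑ i, w i • (X i y2 - (2:ℝ) • X i y1 + X i y0) := by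
      simp only [ctlF, smul_add, smul_sub, Finset.sum_add_distrib, Finset.sum_sub_distrib, Finset.smul_sum]
      simp only [smul_comm (2:ℝ)]
      abel
    rw [this]
    have e1 : ‖X0 y2 - (2:ℝ) • X0 y1 + X0 y0‖ ≤ C * B := by
      have := second_diff hX0smooth (fun y => (h2 y).trans l2) (fun y => (h4 y).trans l4) y0 y1 y2
      rw [hB, mul_add]; exact this
    have e2 := sum_bound w (fun i => X i y2 - (2:ℝ) • X i y1 + X i y0) (C := C * B) (fun i => by
      have := second_diff (hXsmooth i) (fun y => (h3 i y).trans l3) (fun y => (h5 i y).trans l5) y0 y1 y2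
      rw [hB, mul_add]; exact this)
    refine (norm_add_le _ _).trans ((add_le_add e1 e2).trans ?_)
    have e : 0 ≤ (C * B) * (d + ‖w‖) := by positivity
    linarith

section traj
variable {n d : ℕ} {X0 : EuclideanSpace ℝ (Fin n) → EuclideanSpace ℝ (Fin n)}
    {X : Fin d → EuclideanSpace ℝ (Fin n) → EuclideanSpace ℝ (Fin n)} {L : ℝ}
    {x : EuclideanSpace ℝ (Fin n)} {T : ℝ}

lemma ctlG_int (hg : CtlGood X0 X L) (hT : 0 ≤ T) {u : ℝ → EuclideanSpace ℝ (Fin d)}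
    {γ : ℝ → EuclideanSpace ℝ (Fin n)} (hγ : ContinuousOn γ (Icc 0 T))
    (hu : IntervalIntegrable u volume 0 T) :
    IntervalIntegrable (fun s => ctlG X (u s) (γ s)) volume 0 T := by
  unfold ctlG
  have : (fun s => ∑ i, u s i • X i (γ s)) = ∑ i, fun s => u s i • X i (γ s) := by
    ext s; simp
  rw [this]
  apply IntervalIntegrable.sum
  intro i _
  have h1 : IntervalIntegrable (fun s => u s i) volume 0 T :=
    ⟨(EuclideanSpace.proj (𝕜 := ℝ) i).integrable_comp hu.1, (EuclideanSpace.proj (𝕜 := ℝ) i).integrable_comp hu.2⟩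
  exact h1.smul_continuousOn (by rw [uIcc_of_le hT]; exact (hg.c1 i).comp_continuousOn hγ)

lemma ctlF_int (hg : CtlGood X0 X L) (hT : 0 ≤ T) {u : ℝ → EuclideanSpace ℝ (Fin d)}
    {γ : ℝ → EuclideanSpace ℝ (Fin n)} (hγ : ContinuousOn γ (Icc 0 T))
    (hu : IntervalIntegrable u volume 0 T) :
    IntervalIntegrable (fun s => ctlF X0 X (u s) (γ s)) volume 0 T := by
  have := (ContinuousOn.intervalIntegrable (μ := volume) (a := 0) (b := T) (u := fun s => X0 (γ s))
    (by rw [uIcc_of_le hT]; exact hg.c0.comp_continuousOn hγ)).add (ctlG_int hg hT hγ hu)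
  exact this

lemma sub_int {E : Type*} [NormedAddCommGroup E] {f : ℝ → E} {t : ℝ}
    (hf : IntervalIntegrable f volume 0 T) (ht : t ∈ Icc 0 T) : IntervalIntegrable f volume 0 t :=
  hf.mono_set (by rw [uIcc_of_le (ht.1.trans ht.2), uIcc_of_le ht.1]; exact Icc_subset_Icc_right ht.2)

lemma w_int {u : ℝ → EuclideanSpace ℝ (Fin d)} (hu : IntervalIntegrable u volume 0 T) :
    IntervalIntegrable (fun s => L * (1 + ‖u s‖)) volume 0 T :=
  ((intervalIntegrable_const).add hu.norm).const_mul L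

/-- comparison of two trajectories, with the perturbation split off -/
lemma traj_weak (hg : CtlGood X0 X L) (hT : 0 ≤ T) {u0 u1 : ℝ → EuclideanSpace ℝ (Fin d)}
    {γ0 γ1 : ℝ → EuclideanSpace ℝ (Fin n)} (h0 : IsTrajectory X0 X x T u0 γ0)
    (h1 : IsTrajectory X0 X x T u1 γ1) 
    (hu0 : IntervalIntegrable u0 volume 0 T) (hu1 : IntervalIntegrable u1 volume 0 T) {ρ K : ℝ} 
    (hρ : ∀ t ∈ Icc 0 T, ‖∫ s in (0:ℝ)..t, ctlG X (u1 s - u0 s) (γ0 s)‖ ≤ ρ)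
    (hK : ∫ s in (0:ℝ)..T, (1 + ‖u1 s‖) ≤ K) :
    ∀ t ∈ Icc 0 T, ‖γ1 t - γ0 t‖ ≤ ρ * Real.exp (2 * (L * K)) := by
  have hL := hg.nn
  have hρ0 : 0 ≤ ρ := (norm_nonneg _).trans (hρ 0 ⟨le_rfl, hT⟩)
  intro t ht
  have := gron_vec (a := fun s => L * (1 + ‖u1 s‖)) (b := fun _ => 0) hT hρ0 (δ := fun t => γ1 t - γ0 t)
    (k := fun s => ctlF X0 X (u1 s) (γ1 s) - ctlF X0 X (u1 s) (γ0 s)) (h1.1.sub h0.1)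
    (fun s => by positivity) (w_int hu1) (fun s => le_rfl) intervalIntegrable_const
    (fun s _ => by simpa using hg.fl (u1 s) (γ1 s) (γ0 s)) hρ ?_ t ht
  · refine this.trans ?_
    simp only [intervalIntegral.integral_zero, add_zero, intervalIntegral.integral_const_mul]
    gcongr
  · intro t ht
    have i1 := sub_int (ctlF_int hg hT h1.1 hu1) ht
    have i2 := sub_int (ctlF_int hg hT h0.1 hu1) ht
    have i3 := sub_int (ctlF_int hg hT h0.1 hu0) ht
    have i4 := sub_int (ctlG_int hg hT h0.1 (hu1.sub hu0)) ht
    have e : ∀ s, ctlG X (u1 s - u0 s) (γ0 s) = ctlF X0 X (u1 s) (γ0 s) - ctlF X0 X (u0 s) (γ0 s) := by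
      intro s; simp [ctlG, ctlF, sub_smul, Finset.sum_sub_distrib]
    simp only [e]
    rw [intervalIntegral.integral_sub i2 i3, intervalIntegral.integral_sub i1 i2, h1.2 t ht, h0.2 t ht]
    simp only [ctlF]
    abel

lemma traj_diff (hg : CtlGood X0 X L) (hT : 0 ≤ T) {u0 u1 : ℝ → EuclideanSpace ℝ (Fin d)}
    {γ0 γ1 : ℝ → EuclideanSpace ℝ (Fin n)} (h0 : IsTrajectory X0 X x T u0 γ0)
    (h1 : IsTrajectory X0 X x T u1 γ1) 
    (hu0 : IntervalIntegrable u0 volume 0 T) (hu1 : IntervalIntegrable u1 volume 0 T) {N K : ℝ} 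
    (hN : ∫ s in (0:ℝ)..T, ‖u1 s - u0 s‖ ≤ N)
    (hK : ∫ s in (0:ℝ)..T, (1 + ‖u1 s‖) ≤ K) :
    ∀ t ∈ Icc 0 T, ‖γ1 t - γ0 t‖ ≤ (L * N) * Real.exp (2 * (L * K)) := by
  have hL := hg.nn
  apply traj_weak hg hT h0 h1 hu0 hu1 _ hK
  intro t ht
  have i : IntervalIntegrable (fun s => L * ‖u1 s - u0 s‖) volume 0 T := (hu1.sub hu0).norm.const_mul L
  refine (intervalIntegral.norm_integral_le_of_norm_le (g := fun s => L * ‖u1 s - u0 s‖) ht.1 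
    (Eventually.of_forall fun s _ => hg.gb _ _) (sub_int i ht)).trans ?_
  refine (intervalIntegral.integral_mono_interval le_rfl ht.1 ht.2 (Eventually.of_forall 
    (fun s => by simp only [Pi.zero_apply]; positivity)) i).trans ?_
  rw [intervalIntegral.integral_const_mul]
  gcongr

def ctlConst (L K : ℝ) : ℝ :=
  (L * K * (L * Real.exp (2 * (L * K)))^2 + 2 * L * (L * Real.exp (2 * (L * K)))) * Real.exp (2 * (L * K))

lemma traj_second (hg : CtlGood X0 X L) (hT : 0 ≤ T) {u0 u1 u2 v : ℝ → EuclideanSpace ℝ (Fin d)}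
    {γ0 γ1 γ2 : ℝ → EuclideanSpace ℝ (Fin n)} (h0 : IsTrajectory X0 X x T u0 γ0)
    (h1 : IsTrajectory X0 X x T u1 γ1) (h2 : IsTrajectory X0 X x T u2 γ2)
    (hu0 : IntervalIntegrable u0 volume 0 T) (hv : IntervalIntegrable v volume 0 T)
    (e1 : ∀ s, u1 s = u0 s + v s) (e2 : ∀ s, u2 s = u1 s + v s) {N K : ℝ} 
    (hN : ∫ s in (0:ℝ)..T, ‖v s‖ ≤ N)
    (hK0 : ∫ s in (0:ℝ)..T, (1 + ‖u0 s‖) ≤ K)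
    (hK1 : ∫ s in (0:ℝ)..T, (1 + ‖u1 s‖) ≤ K)
    (hK2 : ∫ s in (0:ℝ)..T, (1 + ‖u2 s‖) ≤ K) :
    ‖γ2 T - (2:ℝ) • γ1 T + γ0 T‖ ≤ ctlConst L K * N ^ 2 := by
  have hL := hg.nn
  have hu1 : IntervalIntegrable u1 volume 0 T := by rw [funext e1]; exact hu0.add hv
  have hu2 : IntervalIntegrable u2 volume 0 T := by rw [funext e2]; exact hu1.add hv
  have hN0 : 0 ≤ N := (intervalIntegral.integral_nonneg hT (fun _ _ => norm_nonneg _)).trans hN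
  have d1 := traj_diff hg hT h0 h1 hu0 hu1 (N := N) (by simpa [e1] using hN) hK1
  have d2 := traj_diff hg hT h1 h2 hu1 hu2 (N := N) (by simpa [e2] using hN) hK2
  set c := (L * N) * Real.exp (2 * (L * K)) with hc
  have hc0 : 0 ≤ c := by positivity
  have ib : IntervalIntegrable (fun s => L * (1 + ‖u0 s‖) * c ^ 2 + 2 * L * c * ‖v s‖) volume 0 T :=
    ((w_int hu0).mul_const _).add (hv.norm.const_mul _)
  have := gron_vec (a := fun s => L * (1 + ‖u0 s‖)) (b := fun s => L * (1 + ‖u0 s‖) * c ^ 2 + 2 * L * c * ‖v s‖)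
    hT le_rfl (δ := fun t => γ2 t - (2:ℝ) • γ1 t + γ0 t) (r := fun _ => 0)
    (k := fun s => ctlF X0 X (u2 s) (γ2 s) - (2:ℝ) • ctlF X0 X (u1 s) (γ1 s) + ctlF X0 X (u0 s) (γ0 s))
    ((h2.1.sub (h1.1.const_smul (2:ℝ))).add h0.1)
    (fun s => by positivity) (w_int hu0) (fun s => by positivity) ib ?_ (by simp) ?_ T ⟨hT, le_rfl⟩
  · refine this.trans ?_
    rw [intervalIntegral.integral_add ((w_int hu0).mul_const _) (hv.norm.const_mul _)]
    simp only [zero_add, intervalIntegral.integral_const_mul, intervalIntegral.integral_mul_const]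
    calc _ ≤ (L * K * c^2 + 2 * L * c * N) * Real.exp (2 * (L * K)) := by
          gcongr
          have := intervalIntegral.integral_nonneg (f := fun s => 1 + ‖u0 s‖) (μ := volume) hT (fun s _ => by positivity)
          have : 0 ≤ K := this.trans hK0
          positivity
      _ = _ := by rw [hc, ctlConst]; ring
  · intro s hs
    have e : ctlF X0 X (u2 s) (γ2 s) - (2:ℝ) • ctlF X0 X (u1 s) (γ1 s) + ctlF X0 X (u0 s) (γ0 s) =
      (ctlF X0 X (u0 s) (γ2 s) - (2:ℝ) • ctlF X0 X (u0 s) (γ1 s) + ctlF X0 X (u0 s) (γ0 s)) +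
       (2:ℝ) • (ctlG X (v s) (γ2 s) - ctlG X (v s) (γ1 s)) := by
      simp only [ctlG, ctlF, e2, e1, PiLp.add_apply, add_smul, Finset.sum_add_distrib]
      module
    rw [e]
    refine (norm_add_le _ _).trans ?_
    have f1 := hg.fs (u0 s) (γ0 s) (γ1 s) (γ2 s)
    have f2 := hg.gl (v s) (γ2 s) (γ1 s)
    rw [norm_smul]
    have f3 : ‖γ1 s - γ0 s‖^2 ≤ c^2 := by gcongr; exact d1 s hs
    have f4 := d2 s hs
    calc _ ≤ L * (1 + ‖u0 s‖) * (‖γ2 s - (2:ℝ) • γ1 s + γ0 s‖ + c^2) + 2 * (L * ‖v s‖ * c) := by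
          rw [Real.norm_of_nonneg (by norm_num : (0:ℝ) ≤ 2)]
          refine add_le_add (f1.trans ?_) (mul_le_mul_of_nonneg_left (f2.trans ?_) (by norm_num))
          · gcongr
          · gcongr
      _ = _ := by ring
  · intro t ht
    have i0 := sub_int (ctlF_int hg hT h0.1 hu0) ht
    have i1 := sub_int (ctlF_int hg hT h1.1 hu1) ht
    have i2 := sub_int (ctlF_int hg hT h2.1 hu2) ht
    have q : IntervalIntegrable (fun s => (2:ℝ) • ctlF X0 X (u1 s) (γ1 s)) volume 0 t := by
      have := i1.smul (2:ℝ); exact this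
    rw [intervalIntegral.integral_add (i2.sub q) i0, intervalIntegral.integral_sub i2 q, 
      intervalIntegral.integral_smul, h0.2 t ht, h1.2 t ht, h2.2 t ht]
    simp only [ctlF]
    module

lemma traj_congr {u w : ℝ → EuclideanSpace ℝ (Fin d)} {γ : ℝ → EuclideanSpace ℝ (Fin n)}
    (h : IsTrajectory X0 X x T u γ) (e : u =ᵐ[volume.restrict (Icc (0:ℝ) T)] w) :
    IsTrajectory X0 X x T w γ := by
  refine ⟨h.1, fun t ht => ?_⟩
  rw [h.2 t ht]
  congr 1
  apply intervalIntegral.integral_congr_ae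
  rw [uIoc_of_le ht.1]
  filter_upwards [(ae_restrict_iff' measurableSet_Icc).1 e] with s hs hst
  rw [hs ⟨hst.1.le, hst.2.trans ht.2⟩]

end traj

lemma dyadic {E : Type*} [NormedAddCommGroup E] [NormedSpace ℝ E] {g : ℝ → E} {g' : E} {C : ℝ}
    (hg : HasDerivAt g g' 0) 
    (h : ∀ t ∈ Icc (0:ℝ) 1, ‖g (2 * t) - (2:ℝ) • g t + g 0‖ ≤ C * t ^ 2) :
    ∀ t ∈ Icc (0:ℝ) 1, ‖g t - g 0 - t • g'‖ ≤ C * t ^ 2 := by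
  intro t ht
  set e : ℝ → E := fun t => g t - g 0 - t • g' with he
  have hC : 0 ≤ C := by simpa using (norm_nonneg _).trans (h 1 (by simp))
  have step : ∀ s ∈ Icc (0:ℝ) 1, ‖e (2 * s)‖ ≤ 2 * ‖e s‖ + C * s ^ 2 := by
    intro s hs
    have e1 : e (2 * s) = (2:ℝ) • e s + (g (2 * s) - (2:ℝ) • g s + g 0) := by
      simp only [he]; module
    rw [e1]
    refine (norm_add_le _ _).trans (add_le_add (by rw [norm_smul]; simp) (h s hs))
  have ind : ∀ m : ℕ, ‖e t‖ ≤ 2 ^ m * ‖e (t / 2 ^ m)‖ + C * t ^ 2 / 2 * (1 - (1/2) ^ m) := by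
    intro m
    induction m with
    | zero => simp
    | succ m ih =>
      have hs : t / 2 ^ (m+1) ∈ Icc (0:ℝ) 1 := by
        refine ⟨div_nonneg ht.1 (by positivity), ?_⟩
        rw [div_le_one (by positivity)]
        exact ht.2.trans (one_le_pow₀ (by norm_num))
      have := step _ hs
      have e2 : 2 * (t / 2 ^ (m+1)) = t / 2 ^ m := by field_simp; ring
      rw [e2] at this
      refine ih.trans ?_
      have p2 : (0:ℝ) < 2 ^ m := by positivity
      have h3 := mul_le_mul_of_nonneg_left this p2.le
      have e3 : (2:ℝ) ^ m * (2 * ‖e (t / 2 ^ (m+1))‖ + C * (t / 2 ^ (m+1)) ^ 2) =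
        2 ^ (m+1) * ‖e (t / 2 ^ (m+1))‖ + C * t^2 / 4 * (1/2) ^ m := by
        rw [one_div, inv_pow]; field_simp; ring
      rw [e3] at h3
      have e4 : (1/2 : ℝ) ^ (m+1) = (1/2)^m / 2 := by rw [pow_succ]; ring
      rw [e4]
      linarith
  have lim : Tendsto (fun m : ℕ => 2 ^ m * ‖e (t / 2 ^ m)‖) atTop (𝓝 0) := by
    have ho : (fun s => e s) =o[𝓝 0] (fun s : ℝ => s) := by
      simpa using hasDerivAt_iff_isLittleO.1 hg
    have hz : Tendsto (fun m : ℕ => t / 2 ^ m) atTop (𝓝 0) := by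
      have := (tendsto_pow_atTop_nhds_zero_of_lt_one (r := (1/2:ℝ)) (by norm_num) (by norm_num)).const_mul t
      simpa [div_eq_mul_inv] using this
    have h1 := (ho.comp_tendsto hz).norm_left
    have h2 := (Asymptotics.isBigO_refl (fun m : ℕ => (2:ℝ)^m) atTop).mul_isLittleO h1
    have h3 : (fun m : ℕ => (2:ℝ)^m * ((fun s : ℝ => s) ∘ fun m : ℕ => t / 2 ^ m) m) = fun _ => t := by
      ext m; simp; field_simp
    rw [h3] at h2
    exact ((h2.trans_isBigO (Asymptotics.isBigO_const_const t (one_ne_zero (α := ℝ)) _)).tendsto_div_nhds_zero).congr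
      (fun m => by simp)
  have : ‖e t‖ ≤ 0 + C * t ^ 2 / 2 := by
    refine ge_of_tendsto (lim.add_const (C * t^2/2)) (Eventually.of_forall fun m => (ind m).trans ?_)
    have : 0 ≤ C * t ^ 2 / 2 := by positivity
    have : 0 ≤ C * t ^ 2 / 2 * (1/2) ^ m := by positivity
    linarith
  have h5 : 0 ≤ C * t ^ 2 := by positivity
  linarith

abbrev LpT (d : ℕ) (p T : ℝ) := Lp (EuclideanSpace ℝ (Fin d)) (ENNReal.ofReal p)
        (volume.restrict (Set.Icc (0:ℝ) T))

section lp
variable {n d : ℕ} {p T : ℝ} [hfact : Fact (1 ≤ ENNReal.ofReal p)]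

lemma lp_int (hT : 0 ≤ T) (w : LpT d p T) : IntervalIntegrable w volume 0 T := by
  rw [intervalIntegrable_iff_integrableOn_Icc_of_le hT]
  exact (Lp.memLp w).integrable hfact.out

lemma holder (hp : 1 < p) (w : LpT d p T) {s t : ℝ} (hs : 0 ≤ s) (hst : s ≤ t) (ht : t ≤ T) :
    ∫ z in s..t, ‖w z‖ ≤ ‖w‖ * (t - s) ^ (1 - 1 / p) := by
  have hsub : Ioc s t ⊆ Icc 0 T := fun z hz => ⟨hs.trans hz.1.le, hz.2.trans ht⟩
  have hle : volume.restrict (Ioc s t) ≤ volume.restrict (Icc 0 T) := Measure.restrict_mono hsub le_rfl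
  have hm : AEStronglyMeasurable w (volume.restrict (Ioc s t)) :=
    (Lp.aestronglyMeasurable w).mono_measure hle
  rw [intervalIntegral.integral_of_le hst, integral_norm_eq_lintegral_enorm hm,
    ← eLpNorm_one_eq_lintegral_enorm, Lp.norm_def]
  have h1 := eLpNorm_le_eLpNorm_mul_rpow_measure_univ hfact.out hm
  have h2 := h1.trans (mul_le_mul_left (eLpNorm_mono_measure w hle) _)
  have h3 := ENNReal.toReal_mono ?_ h2
  · refine h3.trans (le_of_eq ?_)
    rw [ENNReal.toReal_mul, ← ENNReal.toReal_rpow]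
    simp [ENNReal.toReal_ofReal (sub_nonneg.2 hst), ENNReal.toReal_ofReal (by linarith : 0 ≤ p)]
  · refine ENNReal.mul_ne_top (Lp.eLpNorm_ne_top w) ?_
    apply ENNReal.rpow_ne_top_of_nonneg
    · rw [ENNReal.toReal_ofReal (by linarith)]
      have : 1 / p ≤ 1 := by rw [div_le_one (by linarith)]; linarith
      simpa using this
    · simp

variable {X0 : EuclideanSpace ℝ (Fin n) → EuclideanSpace ℝ (Fin n)}
    {X : Fin d → EuclideanSpace ℝ (Fin n) → EuclideanSpace ℝ (Fin n)} {L : ℝ}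
    {x : EuclideanSpace ℝ (Fin n)}

lemma exists_clm (hp : 1 < p) (hT : 0 ≤ T) (hg : CtlGood X0 X L) {γ : ℝ → EuclideanSpace ℝ (Fin n)}
    (hγ : ContinuousOn γ (Icc 0 T)) {t : ℝ} (ht : t ∈ Icc 0 T) :
    ∃ Λ : LpT d p T →L[ℝ] EuclideanSpace ℝ (Fin n),
      ∀ w, Λ w = ∫ s in (0:ℝ)..t, ctlG X (w s) (γ s) := by
  have hae : ∀ {f g : ℝ → EuclideanSpace ℝ (Fin d)}, f =ᵐ[volume.restrict (Icc 0 T)] g →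
      ∫ s in (0:ℝ)..t, ctlG X (f s) (γ s) = ∫ s in (0:ℝ)..t, ctlG X (g s) (γ s) := by
    intro f g e
    apply intervalIntegral.integral_congr_ae
    rw [uIoc_of_le ht.1]
    filter_upwards [(ae_restrict_iff' measurableSet_Icc).1 e] with s hs hst
    rw [hs ⟨hst.1.le, hst.2.trans ht.2⟩]
  refine ⟨LinearMap.mkContinuous 
    { toFun := fun w => ∫ s in (0:ℝ)..t, ctlG X (w s) (γ s)
      map_add' := ?_
      map_smul' := ?_ } (L * (t - 0) ^ (1 - 1 / p)) ?_, fun w => rfl⟩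
  · intro w w'
    rw [hae (Lp.coeFn_add w w'), ← intervalIntegral.integral_add
      (sub_int (ctlG_int hg hT hγ (lp_int hT w)) ht) (sub_int (ctlG_int hg hT hγ (lp_int hT w')) ht)]
    congr 1; ext1 s
    simp [ctlG, add_smul, Finset.sum_add_distrib]
  · intro c w
    rw [hae (Lp.coeFn_smul c w), RingHom.id_apply, ← intervalIntegral.integral_smul]
    congr 1; ext1 s
    simp [ctlG, mul_smul, Finset.smul_sum]
  · intro w
    refine (intervalIntegral.norm_integral_le_of_norm_le (g := fun s => L * ‖w s‖) ht.1
      (Eventually.of_forall fun s _ => hg.gb _ _) (sub_int ((lp_int hT w).norm.const_mul L) ht)).trans ?_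
    rw [intervalIntegral.integral_const_mul]
    have := mul_le_mul_of_nonneg_left (holder hp w le_rfl ht.1 ht.2) hg.nn
    linarith

lemma weak_bdd {E : Type*} [NormedAddCommGroup E] [NormedSpace ℝ E] {u : ℕ → E} {l : E}
    (h : ∀ φ : E →L[ℝ] ℝ, Tendsto (fun k => φ (u k)) atTop (𝓝 (φ l))) : ∃ K, ∀ k, ‖u k‖ ≤ K := by
  obtain ⟨C, hC⟩ := banach_steinhaus (g := fun k => NormedSpace.inclusionInDoubleDual ℝ E (u k)) (by
    intro φ
    obtain ⟨C, hC⟩ := (h φ).norm.bddAbove_range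
    exact ⟨C, fun k => hC ⟨k, rfl⟩⟩)
  refine ⟨C, fun k => ?_⟩
  have := hC k
  rwa [show ‖NormedSpace.inclusionInDoubleDual ℝ E (u k)‖ = ‖u k‖ from
    (NormedSpace.inclusionInDoubleDualLi ℝ (E := E)).norm_map (u k)] at this

lemma one_add_int (hp : 1 < p) (hT : 0 ≤ T) (w : LpT d p T) {K : ℝ} (hK : ‖w‖ ≤ K) :
    ∫ s in (0:ℝ)..T, (1 + ‖w s‖) ≤ T + K * T ^ (1 - 1/p) := by
  rw [intervalIntegral.integral_add intervalIntegrable_const (lp_int hT w).norm]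
  have := holder hp w le_rfl hT le_rfl
  simp only [sub_zero] at this
  have h2 : ‖w‖ * T ^ (1 - 1/p) ≤ K * T ^ (1 - 1/p) := by gcongr
  simp
  simp at this h2
  linarith

lemma F_weak (hp : 1 < p) (hT : 0 ≤ T) (hg : CtlGood X0 X L)
    {F : LpT d p T → EuclideanSpace ℝ (Fin n)}
    (hF : ∀ u : LpT d p T, ∃ γ, IsTrajectory X0 X x T (⇑u) γ ∧ F u = γ T)
    {u : ℕ → LpT d p T} {l : LpT d p T}
    (h : ∀ φ : LpT d p T →L[ℝ] ℝ, Tendsto (fun k => φ (u k)) atTop (𝓝 (φ l))) :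
    Tendsto (fun k => F (u k)) atTop (𝓝 (F l)) := by
  have hL := hg.nn
  obtain ⟨K, hK⟩ := weak_bdd h
  have hK0 : 0 ≤ K := (norm_nonneg _).trans (hK 0)
  choose γ hγ hFγ using hF
  have hq : 0 < 1 - 1/p := by
    have : 1 / p < 1 := by rw [div_lt_one (by linarith)]; linarith
    linarith
  set r : ℕ → ℝ → EuclideanSpace ℝ (Fin n) := fun k t => ∫ s in (0:ℝ)..t, ctlG X (u k s - l s) (γ l s) with hr
  have hint : ∀ k, IntervalIntegrable (fun s => ctlG X (u k s - l s) (γ l s)) volume 0 T := fun k =>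
    ctlG_int hg hT (hγ l).1 ((lp_int hT (u k)).sub (lp_int hT l))
  -- pointwise convergence
  have ptw : ∀ t ∈ Icc 0 T, Tendsto (fun k => r k t) atTop (𝓝 0) := by
    intro t ht
    obtain ⟨Λ, hΛ⟩ := exists_clm (d := d) hp hT hg (hγ l).1 ht
    have e : ∀ k, r k t = Λ (u k) - Λ l := by
      intro k
      rw [hΛ, hΛ, ← intervalIntegral.integral_sub
        (sub_int (ctlG_int hg hT (hγ l).1 (lp_int hT (u k))) ht) (sub_int (ctlG_int hg hT (hγ l).1 (lp_int hT l)) ht)]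
      simp only [hr]
      congr 1; ext1 s
      simp [ctlG, sub_smul, Finset.sum_sub_distrib]
    simp only [e]
    have : Tendsto (fun k => Λ (u k)) atTop (𝓝 (Λ l)) := by
      have h1 : Tendsto (fun k => WithLp.ofLp (Λ (u k))) atTop (𝓝 (WithLp.ofLp (Λ l))) := by
        rw [tendsto_pi_nhds]
        intro i
        exact h ((EuclideanSpace.proj (𝕜 := ℝ) i).comp Λ)
      exact ((PiLp.continuous_toLp 2 _).tendsto _).comp h1
    simpa using this.sub_const (Λ l)
  -- equicontinuity
  have equi : ∀ k, ∀ s ∈ Icc 0 T, ∀ t ∈ Icc 0 T, ‖r k t - r k s‖ ≤ L * (K + ‖l‖) * |t - s| ^ (1 - 1/p) := by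
    have main : ∀ k, ∀ s ∈ Icc 0 T, ∀ t ∈ Icc 0 T, s ≤ t → ‖r k t - r k s‖ ≤ L * (K + ‖l‖) * |t - s| ^ (1 - 1/p) := by
      intro k s hs t ht hst
      have sub : ∀ {f : ℝ → ℝ}, IntervalIntegrable f volume 0 T → IntervalIntegrable f volume s t := by
        intro f hf
        exact hf.mono_set (by rw [uIcc_of_le hT]; exact (convex_Icc (0:ℝ) T).ordConnected.uIcc_subset hs ht)
      simp only [hr]
      rw [intervalIntegral.integral_interval_sub_left (sub_int (hint k) ht) (sub_int (hint k) hs)]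
      have i1 := sub (lp_int hT (u k)).norm
      have i2 := sub (lp_int hT l).norm
      refine (intervalIntegral.norm_integral_le_of_norm_le (g := fun z => L * (‖u k z‖ + ‖l z‖)) hst
        (Eventually.of_forall fun z _ => (hg.gb _ _).trans (mul_le_mul_of_nonneg_left (norm_sub_le _ _) hL))
        ((i1.add i2).const_mul L)).trans ?_
      rw [intervalIntegral.integral_const_mul, intervalIntegral.integral_add i1 i2, abs_of_nonneg (sub_nonneg.2 hst), mul_assoc]
      have a1 := holder hp (u k) hs.1 hst ht.2
      have a2 := holder hp l hs.1 hst ht.2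
      have a3 : ‖u k‖ * (t - s) ^ (1 - 1/p) ≤ K * (t - s) ^ (1 - 1/p) :=
        mul_le_mul_of_nonneg_right (hK k) (Real.rpow_nonneg (sub_nonneg.2 hst) _)
      exact mul_le_mul_of_nonneg_left (by linarith) hL
    intro k s hs t ht
    rcases le_total s t with hst | hst
    · exact main k s hs t ht hst
    · rw [norm_sub_rev, abs_sub_comm]; exact main k t ht s hs hst
  have unif : TendstoUniformlyOn r (fun _ => 0) atTop (Icc 0 T) := by
    rw [← tendstoLocallyUniformlyOn_iff_tendstoUniformlyOn_of_compact isCompact_Icc,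
      Metric.tendstoLocallyUniformlyOn_iff]
    intro ε hε s hs
    have hc : Tendsto (fun t => L * (K + ‖l‖) * |t - s| ^ (1 - 1/p)) (𝓝 s) (𝓝 0) := by
      have : Continuous (fun t => L * (K + ‖l‖) * |t - s| ^ (1 - 1/p)) :=
        continuous_const.mul ((continuous_id.sub continuous_const).abs.rpow_const (fun _ => Or.inr hq.le))
      have h2 := this.tendsto s
      simpa only [sub_self, abs_zero, Real.zero_rpow hq.ne', mul_zero] using h2
    refine ⟨_, inter_mem_nhdsWithin _ (hc.eventually_lt_const (half_pos hε)), ?_⟩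
    have h1 : ∀ᶠ k in atTop, ‖r k s‖ < ε / 2 := by
      have := (ptw s hs).norm
      rw [norm_zero] at this
      exact this.eventually_lt_const (half_pos hε)
    filter_upwards [h1] with k hk t ht
    have h2 := equi k s hs t ht.1
    have h3 : L * (K + ‖l‖) * |t - s| ^ (1 - 1/p) < ε / 2 := ht.2
    rw [dist_zero_left]
    calc ‖r k t‖ = ‖r k s + (r k t - r k s)‖ := by congr 1; abel
      _ ≤ ‖r k s‖ + ‖r k t - r k s‖ := norm_add_le _ _
      _ < ε := by linarith
  set M := Real.exp (2 * (L * (T + K * T ^ (1 - 1/p)))) with hM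
  have hM0 : 0 < M := Real.exp_pos _
  rw [Metric.tendsto_atTop']
  intro ε hε
  rw [Metric.tendstoUniformlyOn_iff] at unif
  obtain ⟨k0, hk0⟩ := eventually_atTop.1 (unif (ε / (2 * M)) (by positivity))
  refine ⟨k0, fun k hk => ?_⟩
  have := traj_weak hg hT (hγ l) (hγ (u k)) (lp_int hT l) (lp_int hT (u k)) (ρ := ε / (2 * M))
    (fun t ht => by simpa [dist_zero_left] using (hk0 k hk.le t ht).le) (one_add_int hp hT (u k) (hK k)) T ⟨hT, le_rfl⟩
  rw [hFγ, hFγ, dist_eq_norm]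
  refine this.trans_lt ?_
  rw [← hM]
  have : ε / (2 * M) * M = ε / 2 := by field_simp
  linarith

lemma F_second (hp : 1 < p) (hT : 0 ≤ T) (hg : CtlGood X0 X L)
    {F : LpT d p T → EuclideanSpace ℝ (Fin n)}
    (hF : ∀ u : LpT d p T, ∃ γ, IsTrajectory X0 X x T (⇑u) γ ∧ F u = γ T) (K : ℝ) :
    ∃ C, 0 ≤ C ∧ ∀ u v : LpT d p T, ‖u‖ ≤ K → ‖v‖ ≤ K → 
      ‖F (u + (2:ℝ) • v) - (2:ℝ) • F (u + v) + F u‖ ≤ C * ‖v‖ ^ 2 := by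
  choose γ hγ hFγ using hF
  have hL := hg.nn
  refine ⟨|ctlConst L (T + (3 * K) * T ^ (1 - 1/p))| * (T ^ (1 - 1/p)) ^ 2, by positivity, ?_⟩
  intro u v hu hv
  have hK0 : 0 ≤ K := (norm_nonneg _).trans hu
  have a1 : ⇑(u + v) =ᵐ[volume.restrict (Icc (0:ℝ) T)] fun s => u s + v s := Lp.coeFn_add u v
  have a2 : ⇑(u + (2:ℝ) • v) =ᵐ[volume.restrict (Icc (0:ℝ) T)] fun s => (u s + v s) + v s := by
    filter_upwards [Lp.coeFn_add u ((2:ℝ) • v), Lp.coeFn_smul (2:ℝ) v] with s h1 h2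
    rw [h1, Pi.add_apply, h2, Pi.smul_apply]; module
  have aint : ∀ {w : LpT d p T} {f : ℝ → EuclideanSpace ℝ (Fin d)}, w =ᵐ[volume.restrict (Icc (0:ℝ) T)] f →
      ‖w‖ ≤ 3 * K → ∫ s in (0:ℝ)..T, (1 + ‖f s‖) ≤ T + (3 * K) * T ^ (1 - 1/p) := by
    intro w f e hw
    refine le_trans (le_of_eq ?_) (one_add_int hp hT w hw)
    apply intervalIntegral.integral_congr_ae
    rw [uIoc_of_le hT]
    filter_upwards [(ae_restrict_iff' measurableSet_Icc).1 e] with s hs hst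
    rw [hs ⟨hst.1.le, hst.2⟩]
  have n1 : ‖u + v‖ ≤ 3 * K := (norm_add_le _ _).trans (by linarith)
  have n2 : ‖u + (2:ℝ) • v‖ ≤ 3 * K := (norm_add_le _ _).trans (by rw [norm_smul]; norm_num; linarith)
  have := traj_second hg hT (hγ u) (traj_congr (hγ _) a1) (traj_congr (hγ _) a2) (lp_int hT u) (lp_int hT v)
    (fun s => rfl) (fun s => rfl) (holder hp v le_rfl hT le_rfl) (aint (EventuallyEq.refl _ _) (by linarith)) (aint a1 n1) (aint a2 n2)
  rw [hFγ, hFγ, hFγ]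
  refine this.trans ?_
  rw [sub_zero]
  calc _ ≤ |ctlConst L (T + (3 * K) * T ^ (1 - 1/p))| * (‖v‖ * T ^ (1 - 1/p)) ^ 2 := by
        gcongr; exact le_abs_self _
    _ = _ := by ring

lemma main_thm (hp : 1 < p) (hT : 0 ≤ T) (hg : CtlGood X0 X L)
    {F : LpT d p T → EuclideanSpace ℝ (Fin n)}
    (hF : ∀ u : LpT d p T, ∃ γ, IsTrajectory X0 X x T (⇑u) γ ∧ F u = γ T)
    {D : LpT d p T → (LpT d p T →L[ℝ] EuclideanSpace ℝ (Fin n))}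
    (hD : ∀ w, HasFDerivAt F (D w) w)
    {u : ℕ → LpT d p T} {l : LpT d p T}
    (h : ∀ φ : LpT d p T →L[ℝ] ℝ, Tendsto (fun k => φ (u k)) atTop (𝓝 (φ l))) (v : LpT d p T) :
    Tendsto (fun k => D (u k) v) atTop (𝓝 (D l v)) := by
  obtain ⟨K, hK⟩ := weak_bdd h
  obtain ⟨C, hC0, hC⟩ := F_second hp hT hg hF (max K (max ‖l‖ ‖v‖))
  have key : ∀ w : LpT d p T, ‖w‖ ≤ max K (max ‖l‖ ‖v‖) → ∀ t ∈ Icc (0:ℝ) 1,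
      ‖F (w + t • v) - F w - t • D w v‖ ≤ (C * ‖v‖ ^ 2) * t ^ 2 := by
    intro w hw t ht
    have hder : HasDerivAt (fun t : ℝ => F (w + t • v)) (D w v) 0 := by
      have h1 : HasDerivAt (fun t : ℝ => w + t • v) v 0 := by
        simpa using ((hasDerivAt_id (0:ℝ)).smul_const v).const_add w
      have h2 : HasFDerivAt F (D w) (w + (0:ℝ) • v) := by simpa using hD w
      exact h2.comp_hasDerivAt (0:ℝ) h1
    have := dyadic hder (C := C * ‖v‖ ^ 2) ?_ t ht
    · simpa using this
    · intro s hs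
      have h1 := hC w (s • v) hw (by
        rw [norm_smul, Real.norm_of_nonneg hs.1]
        have : s * ‖v‖ ≤ 1 * ‖v‖ := by gcongr; exact hs.2
        rw [one_mul] at this
        exact this.trans ((le_max_right _ _).trans (le_max_right _ _)))
      rw [norm_smul, Real.norm_of_nonneg hs.1, smul_smul] at h1
      simp only [zero_smul, add_zero]
      refine h1.trans (le_of_eq ?_)
      ring
  set C' := C * ‖v‖ ^ 2 with hC'
  have hC'0 : 0 ≤ C' := by positivity
  rw [Metric.tendsto_atTop']
  intro ε hε
  obtain ⟨t, ht0, ht1, htC⟩ : ∃ t : ℝ, 0 < t ∧ t ≤ 1 ∧ C' * t ≤ ε / 4 := by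
    refine ⟨min 1 (ε / (4 * (C' + 1))), by positivity, min_le_left _ _, ?_⟩
    calc C' * min 1 (ε / (4 * (C' + 1))) ≤ (C' + 1) * (ε / (4 * (C' + 1))) := by
          gcongr
          · linarith
          · exact min_le_right _ _
      _ = ε / 4 := by field_simp
  have l1 := F_weak hp hT hg hF h
  have l2 : Tendsto (fun k => F (u k + t • v)) atTop (𝓝 (F (l + t • v))) := by
    apply F_weak hp hT hg hF
    intro φ
    simp only [map_add]
    exact (h φ).add_const _
  have l3 := ((l2.sub l1).sub_const (F (l + t • v) - F l)).norm
  rw [sub_self, norm_zero] at l3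
  obtain ⟨k0, hk0⟩ := eventually_atTop.1 (l3.eventually_lt_const (show 0 < t * (ε / 4) by positivity))
  refine ⟨k0, fun k hk => ?_⟩
  have b1 := key (u k) ((hK k).trans (le_max_left _ _)) t ⟨ht0.le, ht1⟩
  have b2 := key l ((le_max_left _ _).trans (le_max_right _ _)) t ⟨ht0.le, ht1⟩
  have b3 := hk0 k hk.le
  rw [dist_eq_norm]
  have e : t • (D (u k) v - D l v) = (F (u k + t • v) - F (u k) - (F (l + t • v) - F l))
     - (F (u k + t • v) - F (u k) - t • D (u k) v) + (F (l + t • v) - F l - t • D l v) := by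
    module
  have b4 : t * ‖D (u k) v - D l v‖ ≤ t * (ε / 4) + C' * t ^ 2 + C' * t ^ 2 := by
    rw [← Real.norm_of_nonneg ht0.le, ← norm_smul, Real.norm_of_nonneg ht0.le, e]
    refine (norm_add_le _ _).trans (add_le_add ((norm_sub_le _ _).trans (add_le_add b3.le b1)) b2)
  have b5 : C' * t ^ 2 ≤ t * (ε / 4) := by
    have := mul_le_mul_of_nonneg_left htC ht0.le
    nlinarith
  have b6 : t * ‖D (u k) v - D l v‖ < t * ε := by nlinarith
  exact lt_of_mul_lt_mul_left b6 ht0.le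

end lp

/-- if `u_k ⇀ u` weakly in `L^p([0,T],ℝ^d)`, then the differentials of
the endpoint map `F(u) = γ_u(T)` satisfy `d_{u_k}F(v) → d_uF(v)` for every `v`. -/
theorem stmt13 (n d : ℕ) (p : ℝ) (hp : 1 < p) [Fact (1 ≤ ENNReal.ofReal p)]
    (T : ℝ) (hT : 0 < T) (x : EuclideanSpace ℝ (Fin n))
    (X0 : EuclideanSpace ℝ (Fin n) → EuclideanSpace ℝ (Fin n))
    (X : Fin d → EuclideanSpace ℝ (Fin n) → EuclideanSpace ℝ (Fin n))
    (hX0smooth : ContDiff ℝ (⊤ : ℕ∞) X0) (hXsmooth : ∀ i, ContDiff ℝ (⊤ : ℕ∞) (X i))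
    (hX0bdd : ∃ C, ∀ y, ‖X0 y‖ ≤ C) (hXbdd : ∃ C, ∀ i y, ‖X i y‖ ≤ C)
    (hX0der : ∃ C, ∀ y, ‖fderiv ℝ X0 y‖ ≤ C)
    (hXder : ∃ C, ∀ i y, ‖fderiv ℝ (X i) y‖ ≤ C)
    (hX0der2 : ∃ C, ∀ y, ‖fderiv ℝ (fderiv ℝ X0) y‖ ≤ C)
    (hXder2 : ∃ C, ∀ i y, ‖fderiv ℝ (fderiv ℝ (X i)) y‖ ≤ C)
    (F : Lp (EuclideanSpace ℝ (Fin d)) (ENNReal.ofReal p)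
        (volume.restrict (Set.Icc (0:ℝ) T)) → EuclideanSpace ℝ (Fin n))
    (hF : ∀ u : Lp (EuclideanSpace ℝ (Fin d)) (ENNReal.ofReal p)
        (volume.restrict (Set.Icc (0:ℝ) T)),
      ∃ γ, IsTrajectory X0 X x T (⇑u) γ ∧ F u = γ T)
    (D : Lp (EuclideanSpace ℝ (Fin d)) (ENNReal.ofReal p)
        (volume.restrict (Set.Icc (0:ℝ) T)) →
      (Lp (EuclideanSpace ℝ (Fin d)) (ENNReal.ofReal p)
        (volume.restrict (Set.Icc (0:ℝ) T)) →L[ℝ] EuclideanSpace ℝ (Fin n)))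
    (hD : ∀ w, HasFDerivAt F (D w) w)
    (u : ℕ → Lp (EuclideanSpace ℝ (Fin d)) (ENNReal.ofReal p)
      (volume.restrict (Set.Icc (0:ℝ) T)))
    (ulim : Lp (EuclideanSpace ℝ (Fin d)) (ENNReal.ofReal p)
      (volume.restrict (Set.Icc (0:ℝ) T)))
    (hweak : ∀ φ : Lp (EuclideanSpace ℝ (Fin d)) (ENNReal.ofReal p)
        (volume.restrict (Set.Icc (0:ℝ) T)) →L[ℝ] ℝ,
      Tendsto (fun k => φ (u k)) atTop (𝓝 (φ ulim))) :
    ∀ v, Tendsto (fun k => D (u k) v) atTop (𝓝 (D ulim v)) := by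
  obtain ⟨L, hg⟩ := exists_good X0 X hX0smooth hXsmooth hXbdd hX0der hXder hX0der2 hXder2
  intro v
  exact main_thm hp hT.le hg hF hD hweak v
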